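/- For every odd natural number n ≥ 3, the Orchard crossing number of the star graph K_{n,1} equals n(n−1)(n−3)/8. -/

import Mathlib

set_option linter.unusedSectionVars false

/-!
Common definitions for the Orchard crossing number
(Feder–Garber, "The Orchard crossing number of an abstract graph").
-/

noncomputable section

/-- Points of the plane. -/
abbrev Pt : Type := ℝ × ℝ

/-- The line through two points of the plane. -/
def lineThrough (p q : Pt) : Set Pt := (affineSpan ℝ ({p, q} : Set Pt) : Set Pt)

/-- A line (or any set) `L` separates the points `P` and `Q` if both lie off `L`
and they lie in different connected components of the complement of `L`. -/
def Separates (L : Set Pt) (P Q : Pt) : Prop :=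
  P ∉ L ∧ Q ∉ L ∧ connectedComponentIn Lᶜ P ≠ connectedComponentIn Lᶜ Q

theorem Separates.symm {L : Set Pt} {P Q : Pt} (h : Separates L P Q) : Separates L Q P :=
  ⟨h.2.1, h.1, h.2.2.symm⟩

/-- A generic configuration: a finite set of points, no three of which are collinear. -/
def GenericConfig (S : Set Pt) : Prop :=
  S.Finite ∧ ∀ p ∈ S, ∀ q ∈ S, ∀ r ∈ S, p ≠ q → p ≠ r → q ≠ r →
    ¬ Collinear ℝ ({p, q, r} : Set Pt)

/-- A finite set of points is in convex position if every point of it is an extreme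
point of its convex hull, i.e. lies outside the convex hull of the other points. -/
def ConvexPosition (S : Set Pt) : Prop :=
  ∀ p ∈ S, p ∉ convexHull ℝ (S \ {p})

variable {V : Type*} [Fintype V] [DecidableEq V]

/-- A rectilinear drawing of a graph on vertex set `V`: an injective placement of the
vertices in the plane whose image is a generic configuration. -/
def IsRectDrawing (f : V → Pt) : Prop :=
  Function.Injective f ∧ GenericConfig (Set.range f)

/-- `sepCount f s t` is `n(s,t)`: the number of (unordered) pairs of vertices, both
different from `s` and `t`, whose drawn points span a line separating `f s` from `f t`. -/
def sepCount (f : V → Pt) (s t : V) : ℕ :=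
  Set.ncard {e : Finset V | ∃ a b : V, e = {a, b} ∧ a ≠ b ∧ s ∉ e ∧ t ∉ e ∧
    Separates (lineThrough (f a) (f b)) (f s) (f t)}

theorem sepCount_symm (f : V → Pt) (s t : V) : sepCount f s t = sepCount f t s := by
  unfold sepCount
  congr 1
  ext e
  constructor
  · rintro ⟨a, b, rfl, hab, hs, ht, hsep⟩
    exact ⟨a, b, rfl, hab, ht, hs, hsep.symm⟩
  · rintro ⟨a, b, rfl, hab, ht, hs, hsep⟩
    exact ⟨a, b, rfl, hab, hs, ht, hsep.symm⟩

/-- The crossing number `n(R(G))` of a drawing: the sum of `n(s,t)` over all edges. -/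
def drawingCrossings (G : SimpleGraph V) (f : V → Pt) : ℕ :=
  ∑ e ∈ G.edgeSet.toFinite.toFinset,
    Sym2.lift ⟨fun s t => sepCount f s t, fun s t => sepCount_symm f s t⟩ e

/-- The Orchard crossing number: the minimum of `n(R(G))` over all rectilinear drawings. -/
def OCN (G : SimpleGraph V) : ℕ :=
  sInf {n | ∃ f : V → Pt, IsRectDrawing f ∧ drawingCrossings G f = n}

/-- The maximal Orchard crossing number: the maximum of `n(R(G))` over all drawings. -/
def MOCN (G : SimpleGraph V) : ℕ :=
  sSup {n | ∃ f : V → Pt, IsRectDrawing f ∧ drawingCrossings G f = n}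

/-- The open segment drawn for an edge. -/
def edgeSeg (f : V → Pt) (e : Sym2 V) : Set Pt :=
  Sym2.lift ⟨fun a b => openSegment ℝ (f a) (f b), fun a b => openSegment_symm ℝ (f a) (f b)⟩ e

/-- The number of unordered pairs of distinct edges of `G` whose drawn open segments
intersect. -/
def crossPairs (G : SimpleGraph V) (f : V → Pt) : ℕ :=
  Set.ncard {p : Finset (Sym2 V) | ∃ e₁ e₂ : Sym2 V, p = {e₁, e₂} ∧ e₁ ≠ e₂ ∧
    e₁ ∈ G.edgeSet ∧ e₂ ∈ G.edgeSet ∧ (edgeSeg f e₁ ∩ edgeSeg f e₂).Nonempty}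

/-- The rectilinear crossing number: the minimum number of crossing pairs of edges
over all rectilinear drawings. -/
def rcr (G : SimpleGraph V) : ℕ :=
  sInf {n | ∃ f : V → Pt, IsRectDrawing f ∧ crossPairs G f = n}

/-- The number of 4-element subsets of the drawn points which are in convex position. -/
def convexFour (f : V → Pt) : ℕ :=
  Set.ncard {Q : Finset Pt | Q.card = 4 ∧ (Q : Set Pt) ⊆ Set.range f ∧
    ConvexPosition (Q : Set Pt)}

/-- The cyclic successor on `Fin n`. -/
def nextFin {n : ℕ} (i : Fin n) : Fin n :=
  ⟨(i.val + 1) % n, Nat.mod_lt _ (Nat.zero_lt_of_lt i.isLt)⟩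

/-- The star graph `K_{n,1}` on `n+1` vertices: the center `0` is joined to each of
the `n` outer vertices. -/
def starGraph (n : ℕ) : SimpleGraph (Fin (n + 1)) :=
  SimpleGraph.fromEdgeSet {e | ∃ i : Fin n, e = s((0 : Fin (n + 1)), i.succ)}

/-- The wheel graph `W_{n,1}` on `n+1` vertices: a cycle on the `n` outer vertices
together with a hub `0` joined to each of them. -/
def wheelGraph (n : ℕ) : SimpleGraph (Fin (n + 1)) :=
  SimpleGraph.fromEdgeSet
    ({e | ∃ i : Fin n, e = s((0 : Fin (n + 1)), i.succ)} ∪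
     {e | ∃ i : Fin n, e = s(i.succ, (nextFin i).succ)})

/-- The cycle graph `C_n` on the outer vertices `1, …, n` of `Fin (n+1)`, together
with the isolated vertex `0`. -/
def cycleWithIsolated (n : ℕ) : SimpleGraph (Fin (n + 1)) :=
  SimpleGraph.fromEdgeSet {e | ∃ i : Fin n, e = s(i.succ, (nextFin i).succ)}

/-- `HullCycle f` says that for every `i`, all the other drawn points lie (strictly) on
one side of the line through `f i` and `f (i+1)`; for an injective generic placement this
means the points are in convex position and occur around the convex hull exactly in the
cyclic order `f 0, f 1, …`. -/
def HullCycle {m : ℕ} (f : Fin m → Pt) : Prop :=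
  ∀ i j l : Fin m, j ≠ i → j ≠ nextFin i → l ≠ i → l ≠ nextFin i →
    ¬ Separates (lineThrough (f i) (f (nextFin i))) (f j) (f l)

end

section OrchardStar

open Finset

/-- Twice the signed area of the triangle `a b x`. -/
def orient (a b x : Pt) : ℝ :=
  (b.1 - a.1) * (x.2 - a.2) - (b.2 - a.2) * (x.1 - a.1)

theorem mem_lineThrough_iff {a b : Pt} (hab : a ≠ b) (x : Pt) :
    x ∈ lineThrough a b ↔ orient a b x = 0 := by
  unfold lineThrough orient
  rw [SetLike.mem_coe, mem_affineSpan_pair_iff_exists_lineMap_eq]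
  constructor
  · rintro ⟨r, rfl⟩
    simp only [AffineMap.lineMap_apply, vsub_eq_sub, vadd_eq_add, Prod.fst_add, Prod.snd_add,
      Prod.smul_fst, Prod.smul_snd, Prod.fst_sub, Prod.snd_sub, smul_eq_mul]
    ring
  · intro h
    by_cases h1 : b.1 - a.1 = 0
    · have h2 : b.2 - a.2 ≠ 0 := fun h2 =>
        hab (Prod.ext (sub_eq_zero.mp h1).symm (sub_eq_zero.mp h2).symm)
      have h3 : x.1 - a.1 = 0 := by
        rw [h1] at h
        simpa [h2] using h
      refine ⟨(x.2 - a.2) / (b.2 - a.2), Prod.ext ?_ ?_⟩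
      · simp [AffineMap.lineMap_apply, h1]
        linarith
      · simp [AffineMap.lineMap_apply, h2]
    · refine ⟨(x.1 - a.1) / (b.1 - a.1), Prod.ext ?_ ?_⟩
      · simp [AffineMap.lineMap_apply, h1]
      · simp only [AffineMap.lineMap_apply, vsub_eq_sub, vadd_eq_add, Prod.snd_add,
          Prod.smul_snd, Prod.snd_sub, smul_eq_mul]
        field_simp
        linarith

theorem orient_affine (a b x y : Pt) {s t : ℝ} (hst : s + t = 1) :
    orient a b (s • x + t • y) = s * orient a b x + t * orient a b y := by
  obtain rfl : t = 1 - s := by linarith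
  simp only [orient, Prod.fst_add, Prod.snd_add, Prod.smul_fst, Prod.smul_snd, smul_eq_mul]
  ring

theorem continuous_orient (a b : Pt) : Continuous (orient a b) := by
  unfold orient
  fun_prop

theorem separates_lineThrough_iff {a b : Pt} (hab : a ≠ b) (P Q : Pt) :
    Separates (lineThrough a b) P Q ↔ orient a b P * orient a b Q < 0 := by
  have same_side : ∀ C : Set ℝ, Convex ℝ C → (0 : ℝ) ∉ C → orient a b P ∈ C →
      orient a b Q ∈ C → connectedComponentIn (lineThrough a b)ᶜ P =
        connectedComponentIn (lineThrough a b)ᶜ Q := by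
    intro C hC h0 hP hQ
    have hconv : Convex ℝ (orient a b ⁻¹' C) := by
      intro x hx y hy s t hs ht hst
      simpa [orient_affine a b x y hst] using hC hx hy hs ht hst
    have hsub : orient a b ⁻¹' C ⊆ (lineThrough a b)ᶜ := fun x hx hxl =>
      h0 ((mem_lineThrough_iff hab x).mp hxl ▸ hx)
    exact connectedComponentIn_eq
      (hconv.isPreconnected.subset_connectedComponentIn hP hsub hQ)
  unfold Separates
  rw [mem_lineThrough_iff hab, mem_lineThrough_iff hab]
  constructor
  · rintro ⟨hP, hQ, hne⟩
    rcases lt_or_gt_of_ne hP with h1 | h1 <;> rcases lt_or_gt_of_ne hQ with h2 | h2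
    · exact absurd (same_side _ (convex_Iio 0) (by simp) h1 h2) hne
    · exact mul_neg_of_neg_of_pos h1 h2
    · exact mul_neg_of_pos_of_neg h1 h2
    · exact absurd (same_side _ (convex_Ioi 0) (by simp) h1 h2) hne
  · intro h
    have hP : orient a b P ≠ 0 := fun h0 => by simp [h0] at h
    have hQ : orient a b Q ≠ 0 := fun h0 => by simp [h0] at h
    refine ⟨hP, hQ, fun heq => ?_⟩
    have hPL : P ∈ (lineThrough a b)ᶜ := fun hm => hP ((mem_lineThrough_iff hab P).mp hm)
    have hQL : Q ∈ (lineThrough a b)ᶜ := fun hm => hQ ((mem_lineThrough_iff hab Q).mp hm)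
    have hPc : P ∈ connectedComponentIn (lineThrough a b)ᶜ P := mem_connectedComponentIn hPL
    have hQc : Q ∈ connectedComponentIn (lineThrough a b)ᶜ P :=
      heq ▸ mem_connectedComponentIn hQL
    have hpre : (orient a b '' connectedComponentIn (lineThrough a b)ᶜ P).OrdConnected :=
      (isPreconnected_connectedComponentIn.image _
        (continuous_orient a b).continuousOn).ordConnected
    have h0 : (0 : ℝ) ∈ orient a b '' connectedComponentIn (lineThrough a b)ᶜ P := by
      rcases lt_or_gt_of_ne hP with h1 | h1
      · exact hpre.out (Set.mem_image_of_mem _ hPc) (Set.mem_image_of_mem _ hQc)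
          ⟨h1.le, (pos_of_mul_neg_right h h1.le).le⟩
      · exact hpre.out (Set.mem_image_of_mem _ hQc) (Set.mem_image_of_mem _ hPc)
          ⟨(neg_of_mul_neg_right h h1.le).le, h1.le⟩
    obtain ⟨x, hx, hx0⟩ := h0
    exact connectedComponentIn_subset _ _ hx ((mem_lineThrough_iff hab x).mpr hx0)

theorem collinear_iff_orient_eq_zero {p q : Pt} (hpq : p ≠ q) (r : Pt) :
    Collinear ℝ ({p, q, r} : Set Pt) ↔ orient p q r = 0 := by
  rw [← mem_lineThrough_iff hpq]
  constructor
  · intro h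
    exact h.mem_affineSpan_of_mem_of_ne (by simp) (by simp) (by simp) hpq
  · intro h
    have := (collinear_insert_iff_of_mem_affineSpan (k := ℝ) h).mpr (collinear_pair ℝ p q)
    convert this using 1
    ext x
    simp only [Set.mem_insert_iff, Set.mem_singleton_iff]
    tauto

theorem isRectDrawing_iff_orient {n : ℕ} (f : Fin n → Pt) (hf : Function.Injective f) :
    IsRectDrawing f ↔ ∀ a b c, a ≠ b → a ≠ c → b ≠ c → orient (f a) (f b) (f c) ≠ 0 := by
  constructor
  · rintro ⟨-, -, h⟩ a b c hab hac hbc h0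
    exact h _ ⟨a, rfl⟩ _ ⟨b, rfl⟩ _ ⟨c, rfl⟩ (hf.ne hab) (hf.ne hac) (hf.ne hbc)
      ((collinear_iff_orient_eq_zero (hf.ne hab) _).mpr h0)
  · intro h
    refine ⟨hf, Set.finite_range f, ?_⟩
    rintro _ ⟨a, rfl⟩ _ ⟨b, rfl⟩ _ ⟨c, rfl⟩ hab hac hbc hcol
    exact h a b c (ne_of_apply_ne f hab) (ne_of_apply_ne f hac) (ne_of_apply_ne f hbc)
      ((collinear_iff_orient_eq_zero hab _).mp hcol)

theorem drawingCrossings_starGraph {n : ℕ} (f : Fin (n + 1) → Pt) :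
    drawingCrossings (starGraph n) f = ∑ i : Fin n, sepCount f 0 i.succ := by
  have himage : (starGraph n).edgeSet.toFinite.toFinset =
      univ.image fun i : Fin n => s((0 : Fin (n + 1)), i.succ) := by
    ext e
    simp only [Set.Finite.mem_toFinset, starGraph, SimpleGraph.edgeSet_fromEdgeSet,
      Set.mem_sdiff, Set.mem_ofPred_eq, mem_image, mem_univ, true_and]
    constructor
    · rintro ⟨⟨i, rfl⟩, -⟩
      exact ⟨i, rfl⟩
    · rintro ⟨i, rfl⟩
      exact ⟨⟨i, rfl⟩, by simpa using (Fin.succ_ne_zero i).symm⟩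
  unfold drawingCrossings
  rw [himage, sum_image]
  · rfl
  · intro i _ j _ hij
    simpa using hij

/-- The pairs counted by `sepCount`, counted with both orders. -/
theorem two_mul_sepCount {n : ℕ} (f : Fin (n + 1) → Pt) (hf : Function.Injective f)
    (i : Fin n) :
    2 * sepCount f 0 i.succ = #{p : Fin n × Fin n |
      orient (f p.1.succ) (f p.2.succ) (f 0) *
        orient (f p.1.succ) (f p.2.succ) (f i.succ) < 0} := by
  classical
  set P : Finset (Fin n × Fin n) := {p : Fin n × Fin n |
      orient (f p.1.succ) (f p.2.succ) (f 0) *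
        orient (f p.1.succ) (f p.2.succ) (f i.succ) < 0} with hP
  let g : Fin n × Fin n → Finset (Fin (n + 1)) := fun p => {p.1.succ, p.2.succ}
  have swap_mem : ∀ a b : Fin n, (a, b) ∈ P → (b, a) ∈ P := by
    intro a b h
    simp only [hP, mem_filter, mem_univ, true_and] at h ⊢
    convert h using 1
    unfold orient
    ring
  have ne_of_mem : ∀ a b : Fin n, (a, b) ∈ P → a ≠ b := by
    rintro a b h rfl
    simp only [hP, mem_filter, mem_univ, true_and] at h
    simp [orient] at h
  have hset : {e : Finset (Fin (n + 1)) | ∃ a b, e = {a, b} ∧ a ≠ b ∧ 0 ∉ e ∧ i.succ ∉ e ∧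
      Separates (lineThrough (f a) (f b)) (f 0) (f i.succ)} = (P.image g : Finset _) := by
    ext e
    simp only [Set.mem_ofPred_eq, coe_image, Set.mem_image, mem_coe, Prod.exists]
    constructor
    · rintro ⟨a, b, rfl, hab, h0, -, hsep⟩
      simp only [mem_insert, mem_singleton, not_or] at h0
      obtain ⟨a, rfl⟩ := Fin.exists_succ_eq.mpr (Ne.symm h0.1)
      obtain ⟨b, rfl⟩ := Fin.exists_succ_eq.mpr (Ne.symm h0.2)
      refine ⟨a, b, ?_, rfl⟩
      simpa [hP] using (separates_lineThrough_iff (hf.ne hab) _ _).mp hsep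
    · rintro ⟨a, b, h, rfl⟩
      have hab : a.succ ≠ b.succ := by simpa using ne_of_mem a b h
      have h' : orient (f a.succ) (f b.succ) (f 0) *
          orient (f a.succ) (f b.succ) (f i.succ) < 0 := by simpa [hP] using h
      refine ⟨a.succ, b.succ, rfl, hab, ?_, ?_, (separates_lineThrough_iff (hf.ne hab) _ _).mpr h'⟩
      · simp [g, (Fin.succ_ne_zero _).symm]
      · simp only [g, mem_insert, mem_singleton, not_or]
        constructor <;> intro hi <;> rw [hi] at h' <;> simp [orient, mul_comm] at h'
  have hfib : ∀ e ∈ P.image g, #{p ∈ P | g p = e} = 2 := by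
    intro e he
    obtain ⟨⟨a, b⟩, h, rfl⟩ := mem_image.mp he
    have : {p ∈ P | g p = g (a, b)} = {(a, b), (b, a)} := by
      ext ⟨c, d⟩
      simp only [mem_filter, mem_insert, mem_singleton, Prod.mk.injEq, g]
      constructor
      · rintro ⟨-, hcd⟩
        have hcd' := congrArg (fun s : Finset _ => (s : Set (Fin (n + 1)))) hcd
        simp only [coe_insert, coe_singleton, Set.pair_eq_pair_iff, Fin.succ_inj] at hcd'
        exact hcd'
      · rintro (⟨rfl, rfl⟩ | ⟨rfl, rfl⟩)
        · exact ⟨h, rfl⟩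
        · exact ⟨swap_mem _ _ h, pair_comm _ _⟩
    rw [this, card_pair]
    intro h'
    exact ne_of_mem a b h (Prod.ext_iff.mp h').1
  have hcard : #P = ∑ e ∈ P.image g, #{p ∈ P | g p = e} :=
    card_eq_sum_card_fiberwise fun p hp => mem_image_of_mem g hp
  rw [hcard, sum_congr rfl hfib, sum_const, smul_eq_mul, mul_comm]
  unfold sepCount
  rw [hset, Set.ncard_coe_finset]

section Tournament

variable {ι : Type*} [Fintype ι] [DecidableEq ι]

/-- The out-degree of `i` in the tournament in which `i` beats `j` when `0 < w i j`. -/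
noncomputable def outDeg (w : ι → ι → ℝ) (i : ι) : ℕ := #{j | 0 < w i j}

theorem sum_cyclic {M : Type*} [AddCommMonoid M] (F : ι → ι → ι → M) :
    ∑ i, ∑ j, ∑ k, (F i j k + F j k i + F k i j) = 3 • ∑ i, ∑ j, ∑ k, F i j k := by
  have rotate : ∀ H : ι → ι → ι → M, ∑ i, ∑ j, ∑ k, H j k i = ∑ i, ∑ j, ∑ k, H i j k := by
    intro H
    rw [sum_comm]
    exact sum_congr rfl fun j _ => sum_comm
  have h1 := rotate F
  have h2 := (rotate fun i j k => F j k i).trans h1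
  simp only [sum_add_distrib, h1, h2]
  abel

theorem sum_outDeg (w : ι → ι → ℝ) (hw : ∀ i j, w i j = -w j i)
    (hne : ∀ i j, i ≠ j → w i j ≠ 0) :
    2 * ∑ i, outDeg w i + Fintype.card ι = Fintype.card ι * Fintype.card ι := by
  have hswap : ∑ i, ∑ j, (if 0 < w i j then 1 else 0) =
      ∑ i, ∑ j, (if 0 < w j i then 1 else 0 : ℕ) := sum_comm
  have hpt : ∀ i j, (if 0 < w i j then 1 else 0) + (if 0 < w j i then 1 else 0) +
      (if i = j then 1 else 0) = (1 : ℕ) := by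
    intro i j
    by_cases hij : i = j
    · subst hij
      have : w i i = 0 := by linarith [hw i i]
      simp [this]
    · rcases lt_or_gt_of_ne (hne i j hij) with h | h
      · simp [hij, hw j i, h, h.le]
      · simp [hij, hw j i, h, h.le]
  have hsum : ∑ i : ι, ∑ j : ι, ((if 0 < w i j then 1 else 0) + (if 0 < w j i then 1 else 0) +
      (if i = j then 1 else 0)) = ∑ i : ι, ∑ j : ι, (1 : ℕ) :=
    sum_congr rfl fun i _ => sum_congr rfl fun j _ => hpt i j
  simp only [sum_add_distrib, ← hswap] at hsum
  simp only [sum_ite_eq, mem_univ, if_true, sum_const, card_univ, smul_eq_mul, mul_one] at hsum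
  simp only [outDeg, card_filter]
  omega

/-- Ordered pairs of out-neighbours. -/
theorem sum_out_pairs (w : ι → ι → ℝ) (i : ι) :
    ∑ j, ∑ k, (if 0 < w i j ∧ 0 < w i k ∧ j ≠ k then 1 else 0) =
      outDeg w i * (outDeg w i - 1) := by
  rw [← sum_product' univ univ fun j k => if 0 < w i j ∧ 0 < w i k ∧ j ≠ k then 1 else 0,
    ← card_filter, outDeg, Nat.mul_sub_one, ← offDiag_card]
  congr 1
  ext ⟨j, k⟩
  simp

theorem sources_le_separations_of_signs {x y z : ℝ} (hx : x ≠ 0) (hy : y ≠ 0) (hz : z ≠ 0)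
    (hD : x + y + z ≠ 0) :
    (if 0 < x ∧ 0 < -z then 1 else 0) + (if 0 < y ∧ 0 < -x then 1 else 0) +
        (if 0 < z ∧ 0 < -y then 1 else 0) ≤
      (if y * (x + y + z) < 0 then 1 else 0) + (if z * (x + y + z) < 0 then 1 else 0) +
        (if x * (x + y + z) < 0 then 1 else (0 : ℕ)) := by
  rcases lt_or_gt_of_ne hx with hx | hx <;> rcases lt_or_gt_of_ne hy with hy | hy <;>
    rcases lt_or_gt_of_ne hz with hz | hz <;> rcases lt_or_gt_of_ne hD with hD | hD <;>
    simp [mul_neg_iff, hx, hy, hz, hD, hx.not_gt, hy.not_gt, hz.not_gt, hD.not_gt]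

theorem sources_eq_separations_of_signs {x y z : ℝ} (hx : x ≠ 0) (hy : y ≠ 0) (hz : z ≠ 0)
    (hxy : 0 < x → 0 < y → 0 < x + y + z) (hyz : 0 < y → 0 < z → 0 < x + y + z)
    (hzx : 0 < z → 0 < x → 0 < x + y + z) (hxy' : x < 0 → y < 0 → x + y + z < 0)
    (hyz' : y < 0 → z < 0 → x + y + z < 0) (hzx' : z < 0 → x < 0 → x + y + z < 0) :
    (if 0 < x ∧ 0 < -z then 1 else 0) + (if 0 < y ∧ 0 < -x then 1 else 0) +
        (if 0 < z ∧ 0 < -y then 1 else 0) =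
      (if y * (x + y + z) < 0 then 1 else 0) + (if z * (x + y + z) < 0 then 1 else 0) +
        (if x * (x + y + z) < 0 then 1 else (0 : ℕ)) := by
  rcases lt_or_gt_of_ne hx with hx | hx <;> rcases lt_or_gt_of_ne hy with hy | hy <;>
    rcases lt_or_gt_of_ne hz with hz | hz <;>
    rcases lt_trichotomy (x + y + z) 0 with hD | hD | hD <;>
    first
    | (simp [mul_neg_iff, hx, hy, hz, hD, hx.not_gt, hy.not_gt, hz.not_gt, hD.not_gt]; done)
    | (exfalso; grind)

theorem three_mul_sources (w : ι → ι → ℝ) :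
    3 * ∑ i, outDeg w i * (outDeg w i - 1) =
      ∑ i, ∑ j, ∑ k, ((if 0 < w i j ∧ 0 < w i k ∧ j ≠ k then 1 else 0) +
        (if 0 < w j k ∧ 0 < w j i ∧ k ≠ i then 1 else 0) +
        (if 0 < w k i ∧ 0 < w k j ∧ i ≠ j then 1 else 0)) := by
  rw [sum_cyclic fun i j k => if 0 < w i j ∧ 0 < w i k ∧ j ≠ k then 1 else 0, smul_eq_mul]
  simp only [sum_out_pairs]

theorem three_mul_separations (w : ι → ι → ℝ) :
    3 * ∑ i, ∑ j, ∑ k, (if w j k * (w i j + w j k + w k i) < 0 then 1 else 0) =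
      ∑ i, ∑ j, ∑ k, ((if w j k * (w i j + w j k + w k i) < 0 then 1 else 0) +
        (if w k i * (w i j + w j k + w k i) < 0 then 1 else 0) +
        (if w i j * (w i j + w j k + w k i) < 0 then 1 else 0)) := by
  rw [← smul_eq_mul, ← sum_cyclic]
  refine sum_congr rfl fun i _ => sum_congr rfl fun j _ => sum_congr rfl fun k _ => ?_
  rw [show w j k + w k i + w i j = w i j + w j k + w k i by ring,
    show w k i + w i j + w j k = w i j + w j k + w k i by ring]

theorem sources_eq_separations_of_not_distinct (w : ι → ι → ℝ) (hw : ∀ i j, w i j = -w j i)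
    {i j k : ι} (h : i = j ∨ i = k ∨ j = k) :
    (if 0 < w i j ∧ 0 < w i k ∧ j ≠ k then 1 else 0) +
        (if 0 < w j k ∧ 0 < w j i ∧ k ≠ i then 1 else 0) +
        (if 0 < w k i ∧ 0 < w k j ∧ i ≠ j then 1 else 0) =
      (if w j k * (w i j + w j k + w k i) < 0 then 1 else 0) +
        (if w k i * (w i j + w j k + w k i) < 0 then 1 else 0) +
        (if w i j * (w i j + w j k + w k i) < 0 then 1 else (0 : ℕ)) := by
  have hself : ∀ i, w i i = 0 := fun i => by linarith [hw i i]
  rcases h with rfl | rfl | rfl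
  · simp [hself, hw k i]
  · simp [hself, hw j i]
  · simp [hself, hw j i]

theorem sources_le_separations (w : ι → ι → ℝ) (hw : ∀ i j, w i j = -w j i)
    (hne : ∀ i j, i ≠ j → w i j ≠ 0)
    (hD : ∀ i j k, i ≠ j → i ≠ k → j ≠ k → w i j + w j k + w k i ≠ 0) :
    ∑ i, outDeg w i * (outDeg w i - 1) ≤
      ∑ i, ∑ j, ∑ k, (if w j k * (w i j + w j k + w k i) < 0 then 1 else 0) := by
  refine Nat.le_of_mul_le_mul_left ?_ (zero_lt_three' ℕ)
  rw [three_mul_sources, three_mul_separations]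
  refine sum_le_sum fun i _ => sum_le_sum fun j _ => sum_le_sum fun k _ => ?_
  by_cases h : i = j ∨ i = k ∨ j = k
  · exact (sources_eq_separations_of_not_distinct w hw h).le
  · obtain ⟨hij, hik, hjk⟩ : i ≠ j ∧ i ≠ k ∧ j ≠ k := by simpa using h
    have := sources_le_separations_of_signs (hne i j hij) (hne j k hjk) (hne k i hik.symm)
      (hD i j k hij hik hjk)
    rw [← hw i k, ← hw j i, ← hw k j] at this
    simpa only [ne_eq, hij, hik.symm, hjk, not_false_eq_true, and_true] using this

theorem sources_eq_separations (w : ι → ι → ℝ) (hw : ∀ i j, w i j = -w j i)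
    (hne : ∀ i j, i ≠ j → w i j ≠ 0)
    (hpos : ∀ i j k, 0 < w i j → 0 < w j k → 0 < w i j + w j k + w k i) :
    ∑ i, outDeg w i * (outDeg w i - 1) =
      ∑ i, ∑ j, ∑ k, (if w j k * (w i j + w j k + w k i) < 0 then 1 else 0) := by
  refine Nat.eq_of_mul_eq_mul_left (zero_lt_three' ℕ) ?_
  rw [three_mul_sources, three_mul_separations]
  refine sum_congr rfl fun i _ => sum_congr rfl fun j _ => sum_congr rfl fun k _ => ?_
  by_cases h : i = j ∨ i = k ∨ j = k
  · exact sources_eq_separations_of_not_distinct w hw h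
  · obtain ⟨hij, hik, hjk⟩ : i ≠ j ∧ i ≠ k ∧ j ≠ k := by simpa using h
    have hneg : ∀ i j k, w i j < 0 → w j k < 0 → w i j + w j k + w k i < 0 := by
      intro i j k h1 h2
      linarith [hpos k j i (by linarith [hw k j]) (by linarith [hw j i]), hw i j, hw j k, hw k i]
    have := sources_eq_separations_of_signs (hne i j hij) (hne j k hjk) (hne k i hik.symm)
      (hpos i j k) (fun h1 h2 => by linarith [hpos j k i h1 h2])
      (fun h1 h2 => by linarith [hpos k i j h1 h2])
      (hneg i j k) (fun h1 h2 => by linarith [hneg j k i h1 h2])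
      (fun h1 h2 => by linarith [hneg k i j h1 h2])
    rw [← hw i k, ← hw j i, ← hw k j] at this
    simpa only [ne_eq, hij, hik.symm, hjk, not_false_eq_true, and_true] using this

/-- Convexity bound, attained by regular tournaments. -/
theorem regular_le_sources (w : ι → ι → ℝ) (hw : ∀ i j, w i j = -w j i)
    (hne : ∀ i j, i ≠ j → w i j ≠ 0) {m : ℕ} (hm : 1 ≤ m) (hcard : Fintype.card ι = 2 * m + 1) :
    (2 * m + 1) * (m * (m - 1)) ≤ ∑ i, outDeg w i * (outDeg w i - 1) := by
  have hsum := sum_outDeg w hw hne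
  rw [hcard] at hsum
  have hsum' : ∑ i, outDeg w i = (2 * m + 1) * m := by linarith
  have hpt : ∀ i, (2 * m - 1) * outDeg w i ≤ outDeg w i * (outDeg w i - 1) + m * m := by
    intro i
    generalize outDeg w i = o
    obtain ⟨m, rfl⟩ := Nat.exists_eq_add_of_le' hm
    cases o with
    | zero => simp
    | succ o =>
      simp only [Nat.add_sub_cancel, show 2 * (m + 1) - 1 = 2 * m + 1 by omega]
      zify
      nlinarith [sq_nonneg ((m : ℤ) - o)]
  have := sum_le_sum fun i (_ : i ∈ univ) => hpt i
  rw [← mul_sum, hsum', sum_add_distrib, sum_const, card_univ, hcard, smul_eq_mul] at this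
  obtain ⟨m, rfl⟩ := Nat.exists_eq_add_of_le' hm
  simp only [Nat.add_sub_cancel, show 2 * (m + 1) - 1 = 2 * m + 1 by omega] at this ⊢
  nlinarith

theorem sources_of_outDeg_const (w : ι → ι → ℝ) (hw : ∀ i j, w i j = -w j i)
    (hne : ∀ i j, i ≠ j → w i j ≠ 0) {m : ℕ} (hcard : Fintype.card ι = 2 * m + 1)
    (hconst : ∀ i j, outDeg w i = outDeg w j) :
    ∑ i, outDeg w i * (outDeg w i - 1) = (2 * m + 1) * (m * (m - 1)) := by
  have hsum := sum_outDeg w hw hne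
  have hdeg : ∀ i, outDeg w i = m := by
    intro i
    rw [sum_congr rfl fun j _ => hconst j i, sum_const, card_univ, hcard, smul_eq_mul] at hsum
    nlinarith
  simp [hdeg, hcard]

end Tournament

/-- Twice the signed area spanned by the centre and the outer vertices `i` and `j`. -/
def starOrient {n : ℕ} (f : Fin (n + 1) → Pt) (i j : Fin n) : ℝ :=
  orient (f 0) (f i.succ) (f j.succ)

theorem starOrient_antisymm {n : ℕ} (f : Fin (n + 1) → Pt) (i j : Fin n) :
    starOrient f i j = -starOrient f j i := by
  unfold starOrient orient
  ring

theorem two_mul_drawingCrossings {n : ℕ} (f : Fin (n + 1) → Pt) (hf : Function.Injective f) :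
    2 * drawingCrossings (starGraph n) f =
      ∑ i, ∑ j, ∑ k, (if starOrient f j k *
        (starOrient f i j + starOrient f j k + starOrient f k i) < 0 then 1 else 0) := by
  rw [drawingCrossings_starGraph, mul_sum]
  refine sum_congr rfl fun i _ => ?_
  rw [two_mul_sepCount f hf, card_filter, ← univ_product_univ, sum_product]
  refine sum_congr rfl fun j _ => sum_congr rfl fun k _ => ?_
  congr 2
  unfold starOrient orient
  ring

theorem le_two_mul_drawingCrossings {m : ℕ} (hm : 1 ≤ m) (f : Fin (2 * m + 1 + 1) → Pt)
    (hf : IsRectDrawing f) :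
    (2 * m + 1) * (m * (m - 1)) ≤ 2 * drawingCrossings (starGraph (2 * m + 1)) f := by
  have hgen := (isRectDrawing_iff_orient f hf.1).mp hf
  have hne : ∀ i j, i ≠ j → starOrient f i j ≠ 0 := fun i j hij =>
    hgen _ _ _ (Fin.succ_ne_zero i).symm (Fin.succ_ne_zero j).symm (by simpa using hij)
  rw [two_mul_drawingCrossings f hf.1]
  refine (regular_le_sources _ (starOrient_antisymm f) hne hm (Fintype.card_fin _)).trans
    (sources_le_separations _ (starOrient_antisymm f) hne fun i j k hij hik hjk => ?_)
  convert hgen i.succ j.succ k.succ (by simpa using hij) (by simpa using hik)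
    (by simpa using hjk) using 1
  unfold starOrient orient
  ring

/-- Points on the unit circle, no two equal or antipodal, together with its centre, form a drawing
in which `i, j, k` occur counterclockwise whenever `j` is to the left of `i` and `k` to the left
of `j`, as seen from the centre. -/
theorem isRectDrawing_cons_unit {n : ℕ} (v : Fin n → Pt)
    (hunit : ∀ i, (v i).1 ^ 2 + (v i).2 ^ 2 = 1)
    (hne : ∀ i j, i ≠ j → orient 0 (v i) (v j) ≠ 0) :
    IsRectDrawing (Fin.cons 0 v : Fin (n + 1) → Pt) ∧
      ∀ i j k, 0 < orient 0 (v i) (v j) → 0 < orient 0 (v j) (v k) →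
        0 < orient 0 (v i) (v j) + orient 0 (v j) (v k) + orient 0 (v k) (v i) := by
  have hanti : ∀ i j, orient 0 (v i) (v j) = -orient 0 (v j) (v i) := by
    intro i j
    unfold orient
    ring
  have hinj : Function.Injective (Fin.cons 0 v : Fin (n + 1) → Pt) := by
    rw [Fin.cons_injective_iff]
    constructor
    · rintro ⟨i, hi⟩
      have := hunit i
      simp [hi] at this
    · intro i j hij
      by_contra h
      refine hne i j h ?_
      rw [hij]
      unfold orient
      ring
  have hinner : ∀ i j, i ≠ j → (v i).1 * (v j).1 + (v i).2 * (v j).2 < 1 := by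
    intro i j hij
    have h := hne i j hij
    simp only [orient, Prod.fst_zero, Prod.snd_zero, sub_zero] at h
    have := pow_pos (abs_pos.mpr h) 2
    rw [sq_abs] at this
    nlinarith [hunit i, hunit j]
  have hsum : ∀ i j k, orient 0 (v i) (v j) + orient 0 (v j) (v k) + orient 0 (v k) (v i) =
      orient 0 (v i) (v j) * (1 - ((v j).1 * (v k).1 + (v j).2 * (v k).2)) +
        orient 0 (v j) (v k) * (1 - ((v i).1 * (v j).1 + (v i).2 * (v j).2)) := by
    intro i j k
    simp only [orient, Prod.fst_zero, Prod.snd_zero, sub_zero]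
    linear_combination ((v k).2 * (v i).1 - (v k).1 * (v i).2) * hunit j
  have hpos : ∀ i j k, 0 < orient 0 (v i) (v j) → 0 < orient 0 (v j) (v k) →
      0 < orient 0 (v i) (v j) + orient 0 (v j) (v k) + orient 0 (v k) (v i) := by
    intro i j k h1 h2
    have ne_of_pos : ∀ i j, 0 < orient 0 (v i) (v j) → i ≠ j := by
      rintro i j h rfl
      linarith [hanti i i]
    rw [hsum]
    exact add_pos (mul_pos h1 (sub_pos.mpr (hinner _ _ (ne_of_pos _ _ h2))))
      (mul_pos h2 (sub_pos.mpr (hinner _ _ (ne_of_pos _ _ h1))))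
  refine ⟨(isRectDrawing_iff_orient _ hinj).mpr ?_, hpos⟩
  have hneg : ∀ i j k, orient 0 (v i) (v j) < 0 → orient 0 (v j) (v k) < 0 →
      orient 0 (v i) (v j) + orient 0 (v j) (v k) + orient 0 (v k) (v i) < 0 := by
    intro i j k h1 h2
    linarith [hpos k j i (by linarith [hanti k j]) (by linarith [hanti j i]),
      hanti i j, hanti j k, hanti k i]
  have rotate : ∀ a b c : Pt, orient a b c = orient b c a := by
    intro a b c
    unfold orient
    ring
  have houter : ∀ i j k, i ≠ j → i ≠ k → j ≠ k → orient (v i) (v j) (v k) ≠ 0 := by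
    intro i j k hij hik hjk
    have : orient (v i) (v j) (v k) =
        orient 0 (v i) (v j) + orient 0 (v j) (v k) + orient 0 (v k) (v i) := by
      simp only [orient, Prod.fst_zero, Prod.snd_zero]
      ring
    rw [this]
    rcases lt_or_gt_of_ne (hne i j hij) with h1 | h1 <;>
      rcases lt_or_gt_of_ne (hne j k hjk) with h2 | h2 <;>
      rcases lt_or_gt_of_ne (hne k i hik.symm) with h3 | h3
    · exact (hneg i j k h1 h2).ne
    · exact (hneg i j k h1 h2).ne
    · exact fun h0 => by linarith [hneg k i j h3 h1]
    · exact fun h0 => by linarith [hpos j k i h2 h3]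
    · exact fun h0 => by linarith [hneg j k i h2 h3]
    · exact fun h0 => by linarith [hpos k i j h3 h1]
    · exact (hpos i j k h1 h2).ne'
    · exact (hpos i j k h1 h2).ne'
  intro a b c hab hac hbc
  cases a using Fin.cases with
  | zero =>
    obtain ⟨b, rfl⟩ := Fin.exists_succ_eq.mpr hab.symm
    obtain ⟨c, rfl⟩ := Fin.exists_succ_eq.mpr hac.symm
    simpa using hne b c (by simpa using hbc)
  | succ a =>
    cases b using Fin.cases with
    | zero =>
      obtain ⟨c, rfl⟩ := Fin.exists_succ_eq.mpr hbc.symm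
      rw [rotate]
      simpa using hne c a (by simpa using hac.symm)
    | succ b =>
      cases c using Fin.cases with
      | zero =>
        rw [← rotate]
        simpa using hne a b (by simpa using hab)
      | succ c =>
        simpa using houter a b c (by simpa using hab) (by simpa using hac) (by simpa using hbc)

/-- The vertices of the regular `n`-gon. -/
noncomputable def regularPolygon (n : ℕ) [NeZero n] (i : ZMod n) : Pt :=
  ((ZMod.toCircle i : ℂ).re, (ZMod.toCircle i : ℂ).im)

theorem orient_regularPolygon {n : ℕ} [NeZero n] (i j : ZMod n) :
    orient 0 (regularPolygon n i) (regularPolygon n j) = (ZMod.toCircle (j - i) : ℂ).im := by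
  rw [AddChar.map_sub_eq_div, div_eq_mul_inv, Circle.coe_mul, Circle.coe_inv_eq_conj]
  simp [orient, regularPolygon]
  ring

theorem toCircle_im_ne_zero {n : ℕ} [NeZero n] (hodd : Odd n) {i : ZMod n} (hi : i ≠ 0) :
    (ZMod.toCircle i : ℂ).im ≠ 0 := by
  intro him
  have hconj : (starRingEnd ℂ) (ZMod.toCircle i : ℂ) = ZMod.toCircle i :=
    Complex.conj_eq_iff_im.mpr him
  have heq : ZMod.toCircle (-i) = ZMod.toCircle i := by
    rw [AddChar.map_neg_eq_inv]
    ext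
    rw [Circle.coe_inv_eq_conj, hconj]
  exact hi ((ZMod.neg_eq_self_iff i).mp (ZMod.injective_toCircle heq) |>.resolve_right fun h =>
    Nat.not_even_iff_odd.mpr hodd ⟨i.val, by omega⟩)

theorem exists_drawingCrossings_eq (m : ℕ) : ∃ f : Fin (2 * m + 1 + 1) → Pt, IsRectDrawing f ∧
    2 * drawingCrossings (starGraph (2 * m + 1)) f = (2 * m + 1) * (m * (m - 1)) := by
  let e := ZMod.finEquiv (2 * m + 1)
  let v : Fin (2 * m + 1) → Pt := fun i => regularPolygon _ (e i)
  have hunit : ∀ i, (v i).1 ^ 2 + (v i).2 ^ 2 = 1 := by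
    intro i
    have := Circle.normSq_coe (ZMod.toCircle (e i))
    rw [Complex.normSq_apply] at this
    simp only [v, regularPolygon]
    linarith
  have hne : ∀ i j, i ≠ j → orient 0 (v i) (v j) ≠ 0 := by
    intro i j hij
    simp only [v, orient_regularPolygon]
    exact toCircle_im_ne_zero ⟨m, rfl⟩ (sub_ne_zero.mpr (e.injective.ne hij.symm))
  obtain ⟨hdraw, hpos⟩ := isRectDrawing_cons_unit v hunit hne
  refine ⟨_, hdraw, ?_⟩
  rw [two_mul_drawingCrossings _ hdraw.1,
    ← sources_eq_separations _ (starOrient_antisymm _) (by simpa [starOrient] using hne)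
      (by simpa [starOrient] using hpos)]
  refine sources_of_outDeg_const _ (starOrient_antisymm _) (by simpa [starOrient] using hne)
    (Fintype.card_fin _) fun i j => ?_
  refine card_equiv (Equiv.addRight (j - i)) fun k => ?_
  simp only [starOrient, Fin.cons_zero, Fin.cons_succ, v, orient_regularPolygon, mem_filter,
    mem_univ, true_and, Equiv.coe_addRight, map_add, map_sub]
  rw [show e k + (e j - e i) - e j = e k - e i by ring]

end OrchardStar

/-- For odd n ≥ 3, `OCN(K_{n,1}) = n(n-1)(n-3)/8`. -/
theorem stmt_4 (n : ℕ) (hn : 3 ≤ n) (hodd : Odd n) :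
    OCN (starGraph n) = n * (n - 1) * (n - 3) / 8 := by
  obtain ⟨m, rfl⟩ := hodd
  have hm : 1 ≤ m := by omega
  have hvalue : 2 * ((2 * m + 1) * (2 * m + 1 - 1) * (2 * m + 1 - 3) / 8) =
      (2 * m + 1) * (m * (m - 1)) := by
    obtain ⟨k, rfl⟩ := Nat.exists_eq_add_of_le' hm
    obtain ⟨c, hc⟩ := Nat.even_mul_succ_self k
    have h1 : (2 * (k + 1) + 1) * (2 * (k + 1) + 1 - 1) * (2 * (k + 1) + 1 - 3) =
        8 * ((2 * (k + 1) + 1) * c) := by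
      rw [show 2 * (k + 1) + 1 - 1 = 2 * (k + 1) by omega,
        show 2 * (k + 1) + 1 - 3 = 2 * k by omega]
      linear_combination 4 * (2 * (k + 1) + 1) * hc
    rw [h1, Nat.mul_div_cancel_left _ (by norm_num), Nat.add_sub_cancel]
    rw [mul_comm (k + 1) k, hc]
    ring
  refine IsLeast.csInf_eq ⟨?_, ?_⟩
  · obtain ⟨f, hf, hcr⟩ := exists_drawingCrossings_eq m
    exact ⟨f, hf, by omega⟩
  · rintro _ ⟨f, hf, rfl⟩
    have := le_two_mul_drawingCrossings hm f hf
    omega
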